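/- (Asymptotic Müntz–Szász theorem, continuous case) Let {N_n} be an increasing sequence of natural numbers, let 𝓜_n = span{xⁿ, x^{n+1}, …, x^{n+N_n}}, let ρ_n = n/(n+N_n+1), and let C𝓜_∞ = { f ∈ C[0,1] : dist_{C[0,1]}(f, 𝓜_n) → 0 as n → ∞ }, where distances are taken in the supremum norm. If ρ_n → ρ as n → ∞, then C𝓜_∞ = { f ∈ C[0,1] : f = 0 on [0, ρ²] }. -/

import Mathlib

open MeasureTheory Filter Topology

/-- The monomial `x ↦ xᵏ` as an element of `C([0,1], ℂ)`. -/
noncomputable def monC (k : ℕ) : C(Set.Icc (0 : ℝ) 1, ℂ) :=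
  ⟨fun x => ((x : ℝ) : ℂ) ^ k, by fun_prop⟩

/-- The space `𝓜_n = span{xⁿ, …, x^{n+N_n}}` inside `C([0,1], ℂ)`. -/
noncomputable def MnC (N : ℕ → ℕ) (n : ℕ) : Submodule ℂ C(Set.Icc (0 : ℝ) 1, ℂ) :=
  Submodule.span ℂ (monC '' Set.Icc n (n + N n))

/-!
In `L²[0,1]` the monomials have the Cauchy Gram matrix `1 / (λ_s + λ_t)` with `λ_s = s + 1/2`.
Projecting orthogonally to finitely many of them turns this matrix into `B_s B_t / (λ_s + λ_t)`,
where `B` is a finite Blaschke product. For the window `n, …, n + N_n` the product `B_s` telescopes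
to `2 s + 1` factors, each tending to `ρ` (up to a sign common to all `s`), so the projected
Gram matrix tends to `ρ ^ (2 (s + t + 1)) / (s + t + 1)`, which is the Gram matrix of the monomials
on `[0, ρ²]`. By density, the `L²` distance of `f` to the span of the window tends to the norm
of `f` on `L²[0, ρ²]`.

The inclusion `C[0,1] → L²[0,1]` preserves windows of monomials and the Volterra operator
`L²[0,1] → C[0,1]` shifts them by one, which carries both directions over to the supremum norm. A
continuous function vanishing on `[0, ρ²]` is a uniform limit of primitives of `L²` functions
vanishing on `[0, ρ²]`.
-/

section LimitSubspace

variable {ι 𝕜 E F : Type*} [NontriviallyNormedField 𝕜]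
  [SeminormedAddCommGroup E] [NormedSpace 𝕜 E] [SeminormedAddCommGroup F] [NormedSpace 𝕜 F]
  {l : Filter ι} {M : ι → Submodule 𝕜 E} {v : E}

lemma infDist_eq_norm_mkQ (K : Submodule 𝕜 E) (v : E) : Metric.infDist v K = ‖K.mkQ v‖ :=
  (QuotientAddGroup.norm_mk (S := K.toAddSubgroup) v).symm

/-- The space `𝓜_∞` of all limits of a family of subspaces `M i` along a filter: the vectors whose
distance to `M i` tends to zero. -/
def limitSubspace (l : Filter ι) (M : ι → Submodule 𝕜 E) : Submodule 𝕜 E where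
  carrier := {v | Tendsto (fun i => Metric.infDist v (M i : Set E)) l (𝓝 0)}
  zero_mem' := by simp [infDist_eq_norm_mkQ, tendsto_const_nhds]
  add_mem' {v w} hv hw := by
    simp only [Set.mem_ofPred_eq, infDist_eq_norm_mkQ, map_add] at hv hw ⊢
    exact squeeze_zero (fun _ => norm_nonneg _) (fun _ => norm_add_le _ _)
      (by simpa using hv.add hw)
  smul_mem' c v hv := by
    simp only [Set.mem_ofPred_eq, infDist_eq_norm_mkQ, map_smul, norm_smul] at hv ⊢
    simpa using hv.const_mul ‖c‖

lemma mem_limitSubspace :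
    v ∈ limitSubspace l M ↔ Tendsto (fun i => Metric.infDist v (M i : Set E)) l (𝓝 0) :=
  Iff.rfl

lemma isClosed_limitSubspace : IsClosed (limitSubspace l M : Set E) :=
  (LipschitzWith.uniformEquicontinuous _ 1 fun i =>
    Metric.lipschitz_infDist_pt (M i : Set E)).equicontinuous.isClosed_setOfPred_tendsto
      continuous_const

lemma infDist_map_le (T : E →L[𝕜] F) {K : Submodule 𝕜 E} {K' : Submodule 𝕜 F}
    (h : K.map (T : E →ₗ[𝕜] F) ≤ K') (v : E) :
    Metric.infDist (T v) K' ≤ ‖T‖ * Metric.infDist v K := by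
  refine le_of_forall_pos_le_add fun ε hε => ?_
  obtain ⟨w, hw, hvw⟩ := (Metric.infDist_lt_iff (s := (K : Set E)) ⟨0, K.zero_mem⟩).1
    (lt_add_of_pos_right (Metric.infDist v K) (show 0 < ε / (‖T‖ + 1) by positivity))
  calc Metric.infDist (T v) K' ≤ dist (T v) (T w) :=
        Metric.infDist_le_dist_of_mem (h (Submodule.mem_map_of_mem hw))
    _ ≤ ‖T‖ * dist v w := T.dist_le_opNorm v w
    _ ≤ ‖T‖ * (Metric.infDist v K + ε / (‖T‖ + 1)) := by gcongr
    _ ≤ ‖T‖ * Metric.infDist v K + ε := by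
        rw [mul_add, mul_div_assoc']
        gcongr
        rw [div_le_iff₀ (by positivity)]
        linarith

lemma map_mem_limitSubspace (T : E →L[𝕜] F) {M' : ι → Submodule 𝕜 F}
    (h : ∀ᶠ i in l, (M i).map (T : E →ₗ[𝕜] F) ≤ M' i) (hv : v ∈ limitSubspace l M) :
    T v ∈ limitSubspace l M' :=
  squeeze_zero' (Eventually.of_forall fun _ => Metric.infDist_nonneg)
    (h.mono fun _ hi => infDist_map_le T hi v) (by simpa using hv.const_mul ‖T‖)

lemma limitSubspace_le_of_eventually_le [l.NeBot] {K : Submodule 𝕜 E}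
    (hK : IsClosed (K : Set E)) (h : ∀ᶠ i in l, M i ≤ K) : limitSubspace l M ≤ K := fun v hv => by
  have hle : Metric.infDist v K ≤ 0 := ge_of_tendsto (mem_limitSubspace.1 hv) <| h.mono fun i hi =>
    Metric.infDist_le_infDist_of_subset hi ⟨0, (M i).zero_mem⟩
  exact (hK.mem_iff_infDist_zero ⟨0, K.zero_mem⟩).2 (hle.antisymm Metric.infDist_nonneg)

lemma map_mem_of_dense_span (T : E →L[𝕜] F) {s : Set E}
    (hs : Dense (Submodule.span 𝕜 s : Set E)) {K : Submodule 𝕜 F} (hK : IsClosed (K : Set F))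
    (h : ∀ v ∈ s, T v ∈ K) (v : E) : T v ∈ K := by
  have hspan : Submodule.span 𝕜 s ≤ K.comap (T : E →ₗ[𝕜] F) := Submodule.span_le.2 h
  exact (hK.preimage T.continuous).closure_subset_iff.2 hspan (hs v)

end LimitSubspace

section Projection

open scoped InnerProductSpace

variable {ι 𝕜 E F G : Type*} [RCLike 𝕜] [NormedAddCommGroup E] [InnerProductSpace 𝕜 E]
  [NormedAddCommGroup F] [InnerProductSpace 𝕜 F] [NormedAddCommGroup G] [InnerProductSpace 𝕜 G]

lemma infDist_eq_norm_starProjection_orthogonal (K : Submodule 𝕜 E) [K.HasOrthogonalProjection]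
    (v : E) : Metric.infDist v K = ‖Kᗮ.starProjection v‖ := by
  rw [Submodule.starProjection_orthogonal_val, Submodule.starProjection_minimal,
    Metric.infDist_eq_iInf]
  simp only [dist_eq_norm]
  rfl

instance hasOrthogonalProjection_span_image (e : ι → E) (S : Finset ι) :
    (Submodule.span 𝕜 (e '' S)).HasOrthogonalProjection :=
  haveI := FiniteDimensional.span_of_finite 𝕜 (S.finite_toSet.image e)
  inferInstance

lemma starProjection_orthogonal_sup_span_singleton (K : Submodule 𝕜 E) [K.HasOrthogonalProjection]
    (u v : E) [(K ⊔ 𝕜 ∙ u).HasOrthogonalProjection] :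
    (K ⊔ 𝕜 ∙ u)ᗮ.starProjection v = Kᗮ.starProjection v -
      (⟪Kᗮ.starProjection u, Kᗮ.starProjection v⟫_𝕜 /
        ⟪Kᗮ.starProjection u, Kᗮ.starProjection u⟫_𝕜) • Kᗮ.starProjection u := by
  set r := Kᗮ.starProjection u
  set w := Kᗮ.starProjection v
  have hrK : r ∈ Kᗮ := Kᗮ.starProjection_apply_mem u
  have hwK : w ∈ Kᗮ := Kᗮ.starProjection_apply_mem v
  have hcoeff : ⟪r, w⟫_𝕜 / ⟪r, r⟫_𝕜 * ⟪r, r⟫_𝕜 = ⟪r, w⟫_𝕜 :=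
    div_mul_cancel_of_imp fun h => by rw [inner_self_eq_zero.1 h, inner_zero_left]
  set c := ⟪r, w⟫_𝕜 / ⟪r, r⟫_𝕜
  have hzK : w - c • r ∈ Kᗮ := sub_mem hwK (Submodule.smul_mem _ c hrK)
  have huz : ⟪u, w - c • r⟫_𝕜 = 0 := calc
    ⟪u, w - c • r⟫_𝕜 = ⟪u, Kᗮ.starProjection (w - c • r)⟫_𝕜 := by
      rw [Submodule.starProjection_eq_self_iff.2 hzK]
    _ = ⟪r, w - c • r⟫_𝕜 := (Submodule.inner_starProjection_left_eq_right _ _ _).symm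
    _ = 0 := by rw [inner_sub_right, inner_smul_right, hcoeff, sub_self]
  have hK (x : E) : x - Kᗮ.starProjection x ∈ K := by
    rw [Submodule.starProjection_orthogonal_val, sub_sub_cancel]
    exact K.starProjection_apply_mem x
  have hv : v - (w - c • r) = (v - w) - c • (u - r) + c • u := by module
  refine Submodule.eq_starProjection_of_mem_orthogonal' (z := v - (w - c • r)) ?_ ?_ (by abel)
  · rw [← Submodule.inf_orthogonal]
    exact ⟨hzK, Submodule.mem_orthogonal_singleton_iff_inner_right.2 huz⟩
  · refine Submodule.le_orthogonal_orthogonal _ ?_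
    rw [hv]
    exact add_mem (Submodule.mem_sup_left (sub_mem (hK v) (K.smul_mem c (hK u))))
      (Submodule.mem_sup_right (Submodule.smul_mem _ c (Submodule.mem_span_singleton_self u)))

lemma tendsto_norm_of_tendsto_inner {l : Filter ι} {T : ι → E →L[𝕜] F} {P : E →L[𝕜] G} {C : ℝ}
    (hT : ∀ i, ‖T i‖ ≤ C) {s : Set E} (hs : Dense (Submodule.span 𝕜 s : Set E))
    (h : ∀ v ∈ s, ∀ w ∈ s, Tendsto (fun i => ⟪T i v, T i w⟫_𝕜) l (𝓝 ⟪P v, P w⟫_𝕜)) (v : E) :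
    Tendsto (fun i => ‖T i v‖) l (𝓝 ‖P v‖) := by
  have hspan : ∀ v ∈ Submodule.span 𝕜 s, ∀ w ∈ Submodule.span 𝕜 s,
      Tendsto (fun i => ⟪T i v, T i w⟫_𝕜) l (𝓝 ⟪P v, P w⟫_𝕜) := fun v hv w hw => by
    induction hv, hw using Submodule.span_induction₂ with
    | mem_mem v w hv hw => exact h v hv w hw
    | zero_left | zero_right => simp [tendsto_const_nhds]
    | add_left v v' w _ _ _ hv hv' => simpa only [map_add, inner_add_left] using hv.add hv'
    | add_right v w w' _ _ _ hw hw' => simpa only [map_add, inner_add_right] using hw.add hw'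
    | smul_left c v w _ _ hv => simpa only [map_smul, inner_smul_left] using hv.const_mul _
    | smul_right c v w _ _ hw => simpa only [map_smul, inner_smul_right] using hw.const_mul _
  have hclosed : IsClosed {v | Tendsto (fun i => ‖T i v‖) l (𝓝 ‖P v‖)} := by
    refine Equicontinuous.isClosed_setOfPred_tendsto ?_ P.continuous.norm
    refine (LipschitzWith.uniformEquicontinuous _ C.toNNReal fun i => ?_).equicontinuous
    have hTi : LipschitzWith C.toNNReal (T i) :=
      (T i).lipschitz.weaken (NNReal.le_toNNReal_of_coe_le (hT i))
    simpa only [one_mul, Function.comp_def] using lipschitzWith_one_norm.comp hTi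
  refine hclosed.closure_subset_iff.2 (fun v hv => ?_) (hs v)
  simpa only [Set.mem_ofPred_eq, norm_eq_sqrt_re_inner (𝕜 := 𝕜), Function.comp_def] using
    ((RCLike.continuous_re.tendsto _).comp (hspan v hv v hv)).sqrt

end Projection

section CauchyGram

open scoped InnerProductSpace

variable {ι 𝕜 E : Type*} [RCLike 𝕜] [NormedAddCommGroup E] [InnerProductSpace 𝕜 E]
  {lam : ι → ℝ} {e : ι → E}

/-- The finite Blaschke product `∏ j ∈ S, (lam i - lam j) / (lam i + lam j)` attached to the
exponents `lam`, whose square measures how far `e i` is from the span of the `e j`, `j ∈ S`, when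
the `e j` have the Cauchy matrix `1 / (lam i + lam j)` as their Gram matrix. -/
noncomputable def muntzProd (lam : ι → ℝ) (S : Finset ι) (i : ι) : ℝ :=
  ∏ j ∈ S, (lam i - lam j) / (lam i + lam j)

lemma muntzProd_ne_zero {S : Finset ι} {i : ι} (hpos : ∀ j, 0 < lam j)
    (hinj : Function.Injective lam) (hi : i ∉ S) : muntzProd lam S i ≠ 0 :=
  Finset.prod_ne_zero_iff.2 fun j hj =>
    div_ne_zero (sub_ne_zero.2 (hinj.ne (ne_of_mem_of_not_mem hj hi).symm))
      (add_pos (hpos i) (hpos j)).ne'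

lemma muntzProd_insert [DecidableEq ι] {S : Finset ι} {k : ι} (hk : k ∉ S) (i : ι) :
    muntzProd lam (insert k S) i = (lam i - lam k) / (lam i + lam k) * muntzProd lam S i :=
  Finset.prod_insert hk

theorem inner_starProjection_orthogonal_span_image (hpos : ∀ i, 0 < lam i)
    (hinj : Function.Injective lam)
    (he : ∀ i j, ⟪e i, e j⟫_𝕜 = ((lam i + lam j)⁻¹ : ℝ)) (S : Finset ι) (i j : ι) :
    ⟪(Submodule.span 𝕜 (e '' S))ᗮ.starProjection (e i),
      (Submodule.span 𝕜 (e '' S))ᗮ.starProjection (e j)⟫_𝕜 =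
        (muntzProd lam S i * muntzProd lam S j / (lam i + lam j) : ℝ) := by
  classical
  induction S using Finset.induction_on generalizing i j with
  | empty => simp [he, muntzProd, Submodule.starProjection_top']
  | insert k S hk ih =>
    have hspan : Submodule.span 𝕜 (e '' ↑(insert k S)) =
        Submodule.span 𝕜 (e '' S) ⊔ 𝕜 ∙ e k := by
      rw [Finset.coe_insert, Set.image_insert_eq, Submodule.span_insert, sup_comm]
    have : (Submodule.span 𝕜 (e '' S) ⊔ 𝕜 ∙ e k).HasOrthogonalProjection := by
      rw [← hspan]; infer_instance
    have hB := muntzProd_ne_zero hpos hinj hk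
    have hk0 := (hpos k).ne'
    have hik := (add_pos (hpos i) (hpos k)).ne'
    have hjk := (add_pos (hpos j) (hpos k)).ne'
    have hij := (add_pos (hpos i) (hpos j)).ne'
    simp only [hspan, starProjection_orthogonal_sup_span_singleton, inner_sub_left,
      inner_sub_right, inner_smul_left, inner_smul_right, ih, muntzProd_insert hk,
      map_div₀, RCLike.conj_ofReal]
    norm_cast
    rw [add_comm (lam k) (lam i), add_comm (lam k) (lam j)]
    field_simp
    ring

end CauchyGram

section Asymptotics

lemma prod_range_div_add {α : Type*} [Field α] {g : ℕ → α} (hg : ∀ k, g k ≠ 0) (L m : ℕ) :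
    ∏ k ∈ Finset.range L, g k / g (k + m) = ∏ j ∈ Finset.range m, g j / g (L + j) := by
  rw [Finset.prod_div_distrib, Finset.prod_div_distrib,
    div_eq_div_iff (Finset.prod_ne_zero_iff.2 fun _ _ => hg _)
      (Finset.prod_ne_zero_iff.2 fun _ _ => hg _), ← Finset.prod_range_add, add_comm L m,
    Finset.prod_range_add]
  simp only [add_comm]

lemma muntzProd_Ico {a s : ℕ} (h : s < a) (L : ℕ) :
    muntzProd (fun k : ℕ => (k : ℝ) + 1 / 2) (Finset.Ico a (a + L)) s =
      (-1) ^ L * ∏ j ∈ Finset.range (2 * s + 1), (a + ((j : ℝ) - s)) / (a + L + ((j : ℝ) - s)) := by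
  have hg (k : ℕ) : (a + (k - s) : ℝ) ≠ 0 := by
    have : (s : ℝ) < a := by exact_mod_cast h
    have : (0 : ℝ) ≤ k := k.cast_nonneg
    linarith
  have htel := prod_range_div_add hg L (2 * s + 1)
  push_cast at htel
  simp only [add_assoc, add_sub_assoc] at htel ⊢
  rw [← htel, ← Finset.card_range L, ← Finset.prod_const, Finset.card_range,
    ← Finset.prod_mul_distrib, muntzProd, Finset.prod_Ico_eq_prod_range, Nat.add_sub_cancel_left]
  refine Finset.prod_congr rfl fun k _ => ?_
  push_cast
  rw [neg_one_mul, ← neg_div]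
  congr 1 <;> ring

variable {ι : Type*} {l : Filter ι}

lemma tendsto_add_div_add {u M : ι → ℝ} {ρ : ℝ} (hM : Tendsto M l atTop)
    (h : Tendsto (fun i => u i / M i) l (𝓝 ρ)) (c : ℝ) :
    Tendsto (fun i => (u i + c) / (M i + c)) l (𝓝 ρ) := by
  have hc : Tendsto (fun i => c / M i) l (𝓝 0) := hM.const_div_atTop c
  have hdiv : Tendsto (fun i => (u i / M i + c / M i) / (1 + c / M i)) l (𝓝 ((ρ + 0) / (1 + 0))) :=
    (h.add hc).div (tendsto_const_nhds.add hc) (by simp)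
  rw [add_zero, add_zero, div_one] at hdiv
  refine hdiv.congr' ?_
  filter_upwards [hM.eventually_gt_atTop 0] with i hi
  rw [← add_div, one_add_div hi.ne', div_div_div_cancel_right₀ hi.ne']

lemma tendsto_natCast_add_atTop {a : ι → ℕ} (ha : Tendsto a l atTop) (L : ι → ℕ) :
    Tendsto (fun i => (a i + L i : ℝ)) l atTop :=
  tendsto_atTop_mono (fun _ => le_add_of_nonneg_right (Nat.cast_nonneg _))
    (tendsto_natCast_atTop_atTop.comp ha)

lemma tendsto_muntzProd_mul_muntzProd {a L : ι → ℕ} {ρ : ℝ} (ha : Tendsto a l atTop)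
    (h : Tendsto (fun i => (a i : ℝ) / (a i + L i)) l (𝓝 ρ)) (s t : ℕ) :
    Tendsto (fun i => muntzProd (fun k : ℕ => (k : ℝ) + 1 / 2) (Finset.Ico (a i) (a i + L i)) s *
      muntzProd (fun k : ℕ => (k : ℝ) + 1 / 2) (Finset.Ico (a i) (a i + L i)) t) l
      (𝓝 ((ρ ^ 2) ^ (s + t + 1))) := by
  have hprod (s : ℕ) : Tendsto (fun i => ∏ j ∈ Finset.range (2 * s + 1),
      (a i + ((j : ℝ) - s)) / (a i + L i + ((j : ℝ) - s))) l (𝓝 (ρ ^ (2 * s + 1))) := by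
    simpa using tendsto_finsetProd (Finset.range (2 * s + 1)) fun j _ =>
      tendsto_add_div_add (tendsto_natCast_add_atTop ha L) h ((j : ℝ) - s)
  have hpow : ρ ^ (2 * s + 1) * ρ ^ (2 * t + 1) = (ρ ^ 2) ^ (s + t + 1) := by ring
  refine hpow ▸ ((hprod s).mul (hprod t)).congr' ?_
  filter_upwards [ha.eventually_gt_atTop s, ha.eventually_gt_atTop t] with i hs ht
  rw [muntzProd_Ico hs, muntzProd_Ico ht, mul_mul_mul_comm, ← mul_pow]
  simp

end Asymptotics

section LebesgueSquare

open unitInterval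
open scoped InnerProductSpace

instance isOpenPosMeasure_volume_unitInterval : (volume : Measure I).IsOpenPosMeasure where
  open_pos U hU hne hzero := by
    obtain ⟨a, b, hab, hsub⟩ := hU.exists_Ioo_subset hne
    refine hab.not_ge (Subtype.coe_le_coe.1 (sub_nonpos.1 (ENNReal.ofReal_eq_zero.1 ?_)))
    rw [← unitInterval.volume_Ioo]
    exact measure_mono_null hsub hzero

lemma setIntegral_Iic_coe {E : Type*} [NormedAddCommGroup E] [NormedSpace ℝ E] (f : ℝ → E) (b : I) :
    ∫ t in Set.Iic b, f t = ∫ t in (0 : ℝ)..b, f t := by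
  rw [intervalIntegral.integral_of_le b.2.1, ← integral_Icc_eq_integral_Ioc,
    ← unitInterval.measurePreserving_coe.setIntegral_image_emb
      unitInterval.measurableEmbedding_coe f, Set.image_subtype_val_Icc_Iic,
    Measure.restrict_restrict_of_subset (Set.Icc_subset_Icc_right b.2.2)]

lemma setIntegral_Iic_coe_pow (b : I) (k : ℕ) :
    ∫ t : I in Set.Iic b, ((t : ℝ) : ℂ) ^ k = ((b : ℝ) ^ (k + 1) / (k + 1) : ℝ) := by
  rw [setIntegral_Iic_coe (fun t => (t : ℂ) ^ k)]
  simp only [← Complex.ofReal_pow]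
  rw [intervalIntegral.integral_ofReal]
  simp

/-- The inclusion of `C[0,1]` into `L²[0,1]`. -/
noncomputable abbrev toL2 : C(I, ℂ) →L[ℂ] Lp ℂ 2 (volume : Measure I) :=
  ContinuousMap.toLp 2 volume ℂ

/-- The monomial `x ↦ xᵏ` as an element of `L²[0,1]`. -/
noncomputable def monL2 (k : ℕ) : Lp ℂ 2 (volume : Measure I) :=
  toL2 (monC k)

lemma monL2_coeFn (k : ℕ) : monL2 k =ᵐ[volume] fun t : I => ((t : ℝ) : ℂ) ^ k :=
  ContinuousMap.coeFn_toLp volume (monC k)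

/-- The restriction operator from `L²[0,1]` to `L²[0,b]`. -/
noncomputable abbrev restrictIic (b : I) :
    Lp ℂ 2 (volume : Measure I) →L[ℂ] Lp ℂ 2 (volume.restrict (Set.Iic b)) :=
  LpToLpRestrictCLM I ℂ ℂ volume 2 (Set.Iic b)

lemma inner_restrictIic_monL2 (b : I) (s t : ℕ) :
    ⟪restrictIic b (monL2 s), restrictIic b (monL2 t)⟫_ℂ =
      ((b : ℝ) ^ (s + t + 1) / (s + t + 1) : ℝ) := by
  have hcoe (k : ℕ) : restrictIic b (monL2 k) =ᵐ[volume.restrict (Set.Iic b)]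
      fun t : I => ((t : ℝ) : ℂ) ^ k :=
    (LpToLpRestrictCLM_coeFn ℂ _ _).trans (ae_restrict_of_ae (monL2_coeFn k))
  rw [L2.inner_def]
  calc _ = ∫ x : I in Set.Iic b, ((x : ℝ) : ℂ) ^ (s + t) := by
        refine integral_congr_ae ?_
        filter_upwards [hcoe s, hcoe t] with x hs ht
        simp [hs, ht, pow_add, mul_comm]
    _ = _ := by rw [setIntegral_Iic_coe_pow]; norm_cast

lemma inner_monL2 (s t : ℕ) : ⟪monL2 s, monL2 t⟫_ℂ = ((s + t + 1 : ℝ)⁻¹ : ℝ) := by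
  calc ⟪monL2 s, monL2 t⟫_ℂ = ∫ x : I, ((x : ℝ) : ℂ) ^ (s + t) := by
        rw [monL2, monL2, ContinuousMap.inner_toLp]
        simp [monC, pow_add, mul_comm]
    _ = ∫ x : I in Set.Iic ⊤, ((x : ℝ) : ℂ) ^ (s + t) := by rw [Set.Iic_top, setIntegral_univ]
    _ = ((s + t + 1 : ℝ)⁻¹ : ℝ) := by
        rw [setIntegral_Iic_coe_pow]
        simp

lemma dense_span_range_monC : Dense (Submodule.span ℂ (Set.range monC) : Set C(I, ℂ)) := by
  have hpow (k : ℕ) : monC 1 ^ k = monC k := by ext x; simp [monC]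
  have hstar : star (monC 1) = monC 1 := by ext x; simp [monC]
  have hadjoin : (StarAlgebra.adjoin ℂ {monC 1}).toSubmodule =
      Submodule.span ℂ (Set.range monC) := by
    have hrange : Set.range monC = Submonoid.powers (monC 1) := by
      ext f
      simp [Submonoid.mem_powers_iff, hpow]
    rw [StarAlgebra.adjoin_toSubalgebra, Set.star_singleton, hstar, Set.union_self,
      Algebra.adjoin_eq_span, ← Submonoid.powers_eq_closure, hrange]
  have hsep : (StarAlgebra.adjoin ℂ {monC 1}).SeparatesPoints := fun x y hxy =>
    ⟨monC 1, ⟨monC 1, StarAlgebra.self_mem_adjoin_singleton ℂ _, rfl⟩, by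
      simpa [monC, Subtype.coe_inj] using hxy⟩
  have htop := ContinuousMap.starSubalgebra_topologicalClosure_eq_top_of_separatesPoints _ hsep
  intro f
  rw [← hadjoin]
  exact htop.ge (StarSubalgebra.mem_top (R := ℂ) (x := f))

lemma dense_span_range_monL2 :
    Dense (Submodule.span ℂ (Set.range monL2) : Set (Lp ℂ 2 (volume : Measure I))) := by
  have hmap : Submodule.span ℂ (Set.range monL2) = (Submodule.span ℂ (Set.range monC)).map
      (toL2 : C(I, ℂ) →ₗ[ℂ] Lp ℂ 2 (volume : Measure I)) := by
    rw [Submodule.map_span, ← Set.range_comp]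
    rfl
  rw [hmap]
  exact (ContinuousMap.toLp_denseRange ℂ volume ℂ (by simp)).dense_image
    toL2.continuous dense_span_range_monC

/-- The span of `L` consecutive terms `e a, …, e (a + L - 1)` of a sequence, so that the space
`𝓜_n` is `muntzSpan monC n (N n + 1)`. -/
abbrev muntzSpan {E : Type*} [AddCommGroup E] [Module ℂ E] (e : ℕ → E) (a L : ℕ) : Submodule ℂ E :=
  Submodule.span ℂ (e '' Set.Ico a (a + L))

variable {ι : Type*} {l : Filter ι} {a L : ι → ℕ} {ρ : I}

theorem tendsto_infDist_muntzSpan_monL2 (ha : Tendsto a l atTop)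
    (h : Tendsto (fun i => (a i : ℝ) / (a i + L i)) l (𝓝 ρ)) (g : Lp ℂ 2 (volume : Measure I)) :
    Tendsto (fun i => Metric.infDist g (muntzSpan monL2 (a i) (L i) : Set (Lp ℂ 2 volume))) l
      (𝓝 ‖restrictIic (ρ ^ 2) g‖) := by
  simp only [muntzSpan, ← Finset.coe_Ico, infDist_eq_norm_starProjection_orthogonal]
  refine tendsto_norm_of_tendsto_inner (C := 1) (fun i => Submodule.starProjection_norm_le _)
    dense_span_range_monL2 ?_ g
  rintro _ ⟨s, rfl⟩ _ ⟨t, rfl⟩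
  have hinj : Function.Injective fun k : ℕ => (k : ℝ) + 1 / 2 := fun _ _ h => by simpa using h
  have hgram (s t : ℕ) : ⟪monL2 s, monL2 t⟫_ℂ = (((s + 1 / 2) + (t + 1 / 2) : ℝ)⁻¹ : ℝ) := by
    rw [inner_monL2]; congr 2; ring
  have hden : (s + 1 / 2 : ℝ) + (t + 1 / 2) = s + t + 1 := by ring
  simp only [inner_restrictIic_monL2,
    inner_starProjection_orthogonal_span_image (fun k => by positivity) hinj hgram, hden]
  exact (Complex.continuous_ofReal.tendsto _).comp
    ((tendsto_muntzProd_mul_muntzProd ha h s t).div_const _)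

theorem mem_limitSubspace_muntzSpan_monL2 [l.NeBot] (ha : Tendsto a l atTop)
    (h : Tendsto (fun i => (a i : ℝ) / (a i + L i)) l (𝓝 ρ)) {g : Lp ℂ 2 (volume : Measure I)} :
    g ∈ limitSubspace l (fun i => muntzSpan monL2 (a i) (L i)) ↔ restrictIic (ρ ^ 2) g = 0 := by
  have hg := tendsto_infDist_muntzSpan_monL2 ha h g
  rw [mem_limitSubspace, ← norm_eq_zero]
  exact ⟨tendsto_nhds_unique hg, fun h0 => h0 ▸ hg⟩

end LebesgueSquare

section Primitive

open unitInterval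
open scoped InnerProductSpace

lemma continuous_indicatorConstLp_Iic :
    Continuous fun x : I => indicatorConstLp (μ := volume) 2 (measurableSet_Iic (a := x))
      (measure_ne_top _ _) (1 : ℂ) := by
  refine continuous_indicatorConstLp_set (by simp) fun x => ?_
  have hsub (y : I) : symmDiff (Set.Iic y) (Set.Iic x) ⊆ Set.uIoc x y := by
    rintro t (⟨hty, htx⟩ | ⟨htx, hty⟩)
    · exact Set.Ioc_subset_uIoc ⟨not_le.1 htx, hty⟩
    · exact Set.Ioc_subset_uIoc' ⟨not_le.1 hty, htx⟩
  refine tendsto_of_tendsto_of_tendsto_of_le_of_le tendsto_const_nhds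
    (tendsto_iff_edist_tendsto_0.1 tendsto_id) (fun _ => zero_le) fun y => ?_
  exact (measure_mono (hsub y)).trans_eq (unitInterval.volume_uIoc x y)

/-- The Volterra operator `L²[0,1] → C[0,1]`, `g ↦ (x ↦ ∫₀ˣ g)`, written as the inner product with
the indicator of `[0,x]`, which depends continuously on `x`. -/
noncomputable def volterra : Lp ℂ 2 (volume : Measure I) →L[ℂ] C(I, ℂ) :=
  LinearMap.mkContinuous
    { toFun := fun g => ⟨fun x => ⟪indicatorConstLp 2 (measurableSet_Iic (a := x))
        (measure_ne_top _ _) (1 : ℂ), g⟫_ℂ, continuous_indicatorConstLp_Iic.inner continuous_const⟩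
      map_add' := fun g h => by ext x; exact inner_add_right (𝕜 := ℂ) _ g h
      map_smul' := fun c g => by ext x; exact inner_smul_right (𝕜 := ℂ) _ g c } 1 fun g => by
    refine (ContinuousMap.norm_le _ (by positivity)).2 fun x =>
      (norm_inner_le_norm (𝕜 := ℂ) (indicatorConstLp 2 (measurableSet_Iic (a := x))
        (measure_ne_top _ _) (1 : ℂ)) g).trans ?_
    gcongr
    refine norm_indicatorConstLp_le.trans ?_
    rw [norm_one, one_mul]
    exact Real.rpow_le_one measureReal_nonneg measureReal_le_one (by positivity)

lemma volterra_apply (g : Lp ℂ 2 (volume : Measure I)) (x : I) :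
    volterra g x = ∫ t in Set.Iic x, g t :=
  L2.inner_indicatorConstLp_one measurableSet_Iic (measure_ne_top _ _) g

lemma volterra_monL2 (k : ℕ) : volterra (monL2 k) = ((k : ℂ) + 1)⁻¹ • monC (k + 1) := by
  ext x
  rw [volterra_apply, integral_congr_ae (ae_restrict_of_ae (monL2_coeFn k)),
    setIntegral_Iic_coe_pow]
  simp [monC, div_eq_inv_mul]

/-- The operator subtracting from `f` the function that agrees with `f` on `[0,b]` and is constant
on `[b,1]`; it fixes the functions vanishing on `[0,b]`. -/
noncomputable def subCompInf (b : I) : C(I, ℂ) →L[ℂ] C(I, ℂ) :=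
  .id ℂ _ - ⟨(ContinuousMap.compRightAlgHom ℂ ℂ ⟨(· ⊓ b), by fun_prop⟩).toLinearMap,
    ContinuousMap.compRightAlgHom_continuous ℂ ℂ _⟩

lemma subCompInf_apply (b : I) (f : C(I, ℂ)) (x : I) : subCompInf b f x = f x - f (x ⊓ b) :=
  rfl

lemma exists_restrictIic_eq_zero_volterra_eq (b : I) (g : Lp ℂ 2 (volume : Measure I)) :
    ∃ h, restrictIic b h = 0 ∧ volterra h = subCompInf b (volterra g) := by
  have hmem := (Lp.memLp g).indicator (measurableSet_Ioi (a := b))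
  refine ⟨hmem.toLp, ?_, ?_⟩
  · refine Lp.ext ?_
    filter_upwards [LpToLpRestrictCLM_coeFn ℂ (Set.Iic b) hmem.toLp,
      ae_restrict_of_ae hmem.coeFn_toLp, ae_restrict_mem measurableSet_Iic,
      Lp.coeFn_zero ℂ 2 (volume.restrict (Set.Iic b))] with t hres hind ht hzero
    rw [hres, hind, hzero, Set.indicator_of_notMem (Set.notMem_Ioi.2 ht), Pi.zero_apply]
  · ext x
    have hdiff : Set.Iic x ∩ Set.Ioi b = Set.Iic x \ Set.Iic (x ⊓ b) := by
      rw [← Set.Iic_inter_Iic, Set.sdiff_self_inter, Set.sdiff_eq, Set.compl_Iic]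
    have hint : IntegrableOn g (Set.Iic x) := ((Lp.memLp g).integrable (by norm_num)).integrableOn
    rw [subCompInf_apply, volterra_apply, volterra_apply, volterra_apply,
      integral_congr_ae (ae_restrict_of_ae hmem.coeFn_toLp),
      setIntegral_indicator measurableSet_Ioi, hdiff,
      setIntegral_sdiff measurableSet_Iic hint (Set.Iic_subset_Iic.2 inf_le_left)]

end Primitive

section Continuous

open unitInterval

variable {ι : Type*} {l : Filter ι} {a L : ι → ℕ} {ρ : I}

lemma map_toL2_muntzSpan_monC (a L : ℕ) :
    (muntzSpan monC a L).map (toL2 : C(I, ℂ) →ₗ[ℂ] Lp ℂ 2 (volume : Measure I)) =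
      muntzSpan monL2 a L := by
  rw [Submodule.map_span, ← Set.image_comp]
  rfl

lemma map_volterra_muntzSpan_monL2_le (a L : ℕ) :
    (muntzSpan monL2 a L).map (volterra : Lp ℂ 2 (volume : Measure I) →ₗ[ℂ] C(I, ℂ)) ≤
      muntzSpan monC (a + 1) L := by
  rw [Submodule.map_span, Submodule.span_le]
  rintro _ ⟨_, ⟨k, ⟨hak, hkL⟩, rfl⟩, rfl⟩
  rw [ContinuousLinearMap.coe_coe, volterra_monL2]
  exact Submodule.smul_mem _ _ (Submodule.subset_span ⟨k + 1, ⟨by lia, by lia⟩, rfl⟩)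

lemma apply_zero_of_mem_limitSubspace_monC [l.NeBot] (ha : Tendsto a l atTop) {f : C(I, ℂ)}
    (hf : f ∈ limitSubspace l fun i => muntzSpan monC (a i) (L i)) : f 0 = 0 := by
  have hker : IsClosed ((ContinuousMap.evalCLM ℂ (0 : I) : C(I, ℂ) →L[ℂ] ℂ).ker : Set C(I, ℂ)) :=
    ContinuousLinearMap.isClosed_ker _
  refine limitSubspace_le_of_eventually_le hker ?_ hf
  filter_upwards [ha.eventually_ge_atTop 1] with i hi
  rw [Submodule.span_le]
  rintro _ ⟨k, hk, rfl⟩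
  have hk0 : k ≠ 0 := Nat.one_le_iff_ne_zero.1 (hi.trans hk.1)
  simp [monC, hk0]

lemma eqOn_zero_of_restrictIic_toL2_eq_zero {b : I} (hb : b ≠ 0) {f : C(I, ℂ)}
    (hf : restrictIic b (toL2 f) = 0) : Set.EqOn f 0 (Set.Iic b) := by
  have htoL2 : toL2 f =ᵐ[volume.restrict (Set.Iic b)] f :=
    ae_restrict_of_ae (ContinuousMap.coeFn_toLp volume f)
  have hae : f =ᵐ[volume.restrict (Set.Iic b)] 0 :=
    calc f =ᵐ[volume.restrict (Set.Iic b)] toL2 f := htoL2.symm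
      _ =ᵐ[volume.restrict (Set.Iic b)] restrictIic b (toL2 f) :=
          (LpToLpRestrictCLM_coeFn ℂ (Set.Iic b) (toL2 f)).symm
      _ =ᵐ[volume.restrict (Set.Iic b)] 0 := by rw [hf]; exact Lp.coeFn_zero ℂ 2 _
  rw [← Set.Icc_bot] at hae ⊢
  exact Measure.eqOn_Icc_of_ae_eq volume hb.symm hae f.continuous.continuousOn continuousOn_const

lemma eqOn_zero_of_mem_limitSubspace_monC [l.NeBot] (ha : Tendsto a l atTop)
    (h : Tendsto (fun i => (a i : ℝ) / (a i + L i)) l (𝓝 ρ)) {f : C(I, ℂ)}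
    (hf : f ∈ limitSubspace l fun i => muntzSpan monC (a i) (L i)) :
    Set.EqOn f 0 (Set.Iic (ρ ^ 2)) := by
  by_cases hρ : ρ ^ 2 = 0
  · intro x hx
    have hx0 : x = 0 := le_antisymm (hρ ▸ hx) x.2.1
    rw [hx0]
    exact apply_zero_of_mem_limitSubspace_monC ha hf
  · exact eqOn_zero_of_restrictIic_toL2_eq_zero hρ <| (mem_limitSubspace_muntzSpan_monL2 ha h).1 <|
      map_mem_limitSubspace toL2 (.of_forall fun i => (map_toL2_muntzSpan_monC _ _).le) hf

lemma volterra_mem_limitSubspace (ha : Tendsto a l atTop)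
    (h : Tendsto (fun i => (a i : ℝ) / (a i + L i)) l (𝓝 ρ)) {g : Lp ℂ 2 (volume : Measure I)}
    (hg : restrictIic (ρ ^ 2) g = 0) :
    volterra g ∈ limitSubspace l fun i => muntzSpan monC (a i) (L i) := by
  rcases l.eq_or_neBot with rfl | _
  · simp [mem_limitSubspace]
  have hpred : ∀ᶠ i in l, a i - 1 + 1 = a i :=
    (ha.eventually_ge_atTop 1).mono fun i hi => Nat.sub_add_cancel hi
  have ha' : Tendsto (fun i => a i - 1) l atTop := tendsto_sub_atTop_nat 1 |>.comp ha
  have h' : Tendsto (fun i => ((a i - 1 : ℕ) : ℝ) / ((a i - 1 : ℕ) + L i)) l (𝓝 ρ) := by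
    refine (tendsto_add_div_add (tendsto_natCast_add_atTop ha L) h (-1)).congr' ?_
    filter_upwards [ha.eventually_ge_atTop 1] with i hi
    push_cast [hi]
    ring
  refine map_mem_limitSubspace volterra ?_ ((mem_limitSubspace_muntzSpan_monL2 ha' h').2 hg)
  filter_upwards [hpred] with i hi
  simpa only [hi] using map_volterra_muntzSpan_monL2_le (a i - 1) (L i)

lemma subCompInf_monC_mem_limitSubspace (ha : Tendsto a l atTop)
    (h : Tendsto (fun i => (a i : ℝ) / (a i + L i)) l (𝓝 ρ)) (k : ℕ) :
    subCompInf (ρ ^ 2) (monC k) ∈ limitSubspace l fun i => muntzSpan monC (a i) (L i) := by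
  cases k with
  | zero =>
    have hzero : subCompInf (ρ ^ 2) (monC 0) = 0 := by ext x; simp [subCompInf_apply, monC]
    exact hzero ▸ Submodule.zero_mem _
  | succ k =>
    obtain ⟨g, hg, hvol⟩ := exists_restrictIic_eq_zero_volterra_eq (ρ ^ 2) (monL2 k)
    have hk : (k : ℂ) + 1 ≠ 0 := k.cast_add_one_ne_zero
    rw [← smul_inv_smul₀ hk (monC (k + 1)), ← volterra_monL2, map_smul, ← hvol]
    exact Submodule.smul_mem _ _ (volterra_mem_limitSubspace ha h hg)

lemma subCompInf_mem_limitSubspace (ha : Tendsto a l atTop)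
    (h : Tendsto (fun i => (a i : ℝ) / (a i + L i)) l (𝓝 ρ)) (f : C(I, ℂ)) :
    subCompInf (ρ ^ 2) f ∈ limitSubspace l fun i => muntzSpan monC (a i) (L i) :=
  map_mem_of_dense_span _ dense_span_range_monC isClosed_limitSubspace
    (Set.forall_mem_range.2 (subCompInf_monC_mem_limitSubspace ha h)) f

lemma subCompInf_eq_self {b : I} {f : C(I, ℂ)} (hf : Set.EqOn f 0 (Set.Iic b)) :
    subCompInf b f = f := by
  ext x
  rw [subCompInf_apply, hf (Set.mem_Iic.2 inf_le_right), Pi.zero_apply, sub_zero]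

theorem mem_limitSubspace_muntzSpan_monC [l.NeBot] (ha : Tendsto a l atTop)
    (h : Tendsto (fun i => (a i : ℝ) / (a i + L i)) l (𝓝 ρ)) {f : C(I, ℂ)} :
    f ∈ limitSubspace l (fun i => muntzSpan monC (a i) (L i)) ↔
      Set.EqOn f 0 (Set.Iic (ρ ^ 2)) :=
  ⟨eqOn_zero_of_mem_limitSubspace_monC ha h, fun hf =>
    subCompInf_eq_self hf ▸ subCompInf_mem_limitSubspace ha h f⟩

end Continuous

theorem asymptotic_muntz_szasz_continuous_general {ι : Type*} {l : Filter ι} [l.NeBot]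
    {a L : ι → ℕ} (ha : Tendsto a l atTop) {ρ : ℝ}
    (hρ : Tendsto (fun i => (a i : ℝ) / (a i + L i)) l (𝓝 ρ)) :
    {f : C(Set.Icc (0 : ℝ) 1, ℂ) | Tendsto (fun i => Metric.infDist f
          (Submodule.span ℂ (monC '' Set.Ico (a i) (a i + L i)) :
            Set C(Set.Icc (0 : ℝ) 1, ℂ))) l (𝓝 0)} =
      {f : C(Set.Icc (0 : ℝ) 1, ℂ) | ∀ x : Set.Icc (0 : ℝ) 1, (x : ℝ) ≤ ρ ^ 2 → f x = 0} := by
  have hmem : ρ ∈ Set.Icc (0 : ℝ) 1 := isClosed_Icc.mem_of_tendsto hρ <| .of_forall fun i =>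
    ⟨by positivity, div_le_one_of_le₀ (by simp) (by positivity)⟩
  lift ρ to Set.Icc (0 : ℝ) 1 using hmem
  ext f
  exact mem_limitSubspace_muntzSpan_monC ha hρ

/-- **Asymptotic Müntz–Szász theorem, continuous case.** Let `{N_n}` be an
increasing sequence of naturals, `𝓜_n = span{xⁿ, …, x^{n+N_n}} ⊆ C([0,1], ℂ)`,
`ρ_n = n/(n+N_n+1)`, and `C𝓜_∞ = {f ∈ C[0,1] : dist(f, 𝓜_n) → 0}` in the
supremum norm.  If `ρ_n → ρ`, then `C𝓜_∞` is exactly the set of continuous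
functions vanishing on `[0, ρ²]`. -/
theorem asymptotic_muntz_szasz_continuous (N : ℕ → ℕ) (hN : StrictMono N) (ρ : ℝ)
    (hρ : Tendsto (fun n : ℕ => (n : ℝ) / ((n : ℝ) + (N n : ℝ) + 1)) atTop (𝓝 ρ)) :
    {f : C(Set.Icc (0 : ℝ) 1, ℂ) |
        Tendsto (fun n => Metric.infDist f
          (MnC N n : Set C(Set.Icc (0 : ℝ) 1, ℂ))) atTop (𝓝 0)} =
      {f : C(Set.Icc (0 : ℝ) 1, ℂ) | ∀ x : Set.Icc (0 : ℝ) 1, (x : ℝ) ≤ ρ ^ 2 → f x = 0} := by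
  simpa [MnC, Set.Ico_add_one_right_eq_Icc, ← add_assoc] using
    asymptotic_muntz_szasz_continuous_general (L := fun n => N n + 1) tendsto_id (ρ := ρ)
      (by simpa [← add_assoc] using hρ)
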